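/- Injective fixpoint transfer: let L and L' be complete lattices, F : L → L and F' : L' → L' monotone functions, and g : L → L' an injective map preserving arbitrary suprema such that g ∘ F = F' ∘ g. Then for every η : L, η is the least fixed point of F if and only if g η is the least fixed point of F'. -/

import Mathlib

section LfpTransfer

variable {L L' : Type*} [CompleteLattice L] [CompleteLattice L'] {f : L →o L} {f' : L' →o L'}
  {g : L → L'}

theorem lfp_le_map_lfp (hle : ∀ a, f' (g a) ≤ g (f a)) : f'.lfp ≤ g f.lfp :=
  f'.lfp_le <| calc
    f' (g f.lfp) ≤ g (f f.lfp) := hle f.lfp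
    _ = g f.lfp := by rw [f.map_lfp]

theorem map_lfp_le_lfp (hg : ∀ s : Set L, g (sSup s) ≤ sSup (g '' s))
    (hle : ∀ a, g (f a) ≤ f' (g a)) : g f.lfp ≤ f'.lfp := by
  refine f.lfp_induction (p := fun a ↦ g a ≤ f'.lfp) (fun a ha _ ↦ ?_) (fun s hs ↦ ?_)
  · exact (hle a).trans (f'.map_le_lfp ha)
  · exact (hg s).trans (sSup_le (Set.forall_mem_image.2 hs))

theorem map_lfp_eq_lfp_of_semiconj (hg : ∀ s : Set L, g (sSup s) ≤ sSup (g '' s))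
    (hcomm : Function.Semiconj g f f') : g f.lfp = f'.lfp :=
  le_antisymm (map_lfp_le_lfp hg fun a ↦ (hcomm a).le) (lfp_le_map_lfp fun a ↦ (hcomm a).ge)

theorem injective_fixpoint_transfer_general (hinj : Function.Injective g)
    (hg : ∀ s : Set L, g (sSup s) ≤ sSup (g '' s)) (hcomm : Function.Semiconj g f f') (η : L) :
    η = f.lfp ↔ g η = f'.lfp := by
  rw [← map_lfp_eq_lfp_of_semiconj hg hcomm, hinj.eq_iff]

end LfpTransfer

/-- Injective fixpoint transfer: if `g` is injective, preserves arbitrary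
suprema, and intertwines the monotone functions `F` and `F'`, then `η` is the
least fixed point of `F` iff `g η` is the least fixed point of `F'`. -/
theorem injective_fixpoint_transfer {L L' : Type*} [CompleteLattice L]
    [CompleteLattice L']
    (F : L → L) (hF : Monotone F) (F' : L' → L') (hF' : Monotone F')
    (g : L → L') (hinj : Function.Injective g)
    (hg : ∀ s : Set L, g (sSup s) = sSup (g '' s))
    (hcomm : g ∘ F = F' ∘ g) :
    ∀ η : L, η = OrderHom.lfp ⟨F, hF⟩ ↔ g η = OrderHom.lfp ⟨F', hF'⟩ :=
  injective_fixpoint_transfer_general hinj (fun s ↦ (hg s).le) (congrFun hcomm)
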